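/- Let δ > 0 and M₁ > 0. There are a constant c₁ > 0, depending only on M₁ and δ, and N ∈ ℕ such that for all n ≥ N and all α ∈ (0,1) the following holds. Set τ_n := (56 log^{1+δ} n)^{1/2}. Let (σ_k)_{k∈ℤ} be any valid autocovariance sequence of size n with Σ_{k∈ℤ} σ_k² ≤ M₁, let X = (X_1,…,X_n) be the corresponding centered Gaussian vector, and independently let ξ_1,…,ξ_n be i.i.d. Laplace(0, 2τ_n/α). Define the non-interactive privatized sample Z_i := trim_{τ_n}(X_i) + ξ_i. For an integer j with |j| ≤ √n define the estimator σ̂_j^{NI} := (1/n) Σ_{t=1}^{n−|j|} Z_t Z_{t+|j|} if j ≠ 0, and σ̂_0^{NI} := (1/n) Σ_{t=1}^n Z_t² − 8τ_n²/α². Then E[(σ̂_j^{NI} − σ_j)²] ≤ c₁ · log^{2+2δ}(n) · max{ 1/n, 1/(n α⁴) }. -/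

import Mathlib

open MeasureTheory ProbabilityTheory Real

/-- `trim c x` truncates `x` to the interval `[-c, c]`. -/
noncomputable def trim (c x : ℝ) : ℝ := max (-c) (min x c)

/-- The Laplace distribution with location `m` and scale `b`. -/
noncomputable def laplace (m b : ℝ) : Measure ℝ :=
  volume.withDensity fun z => ENNReal.ofReal ((1 / (2 * b)) * Real.exp (-|z - m| / b))

/-- The `n × n` Toeplitz matrix `(σ_{|i-k|})` built from a sequence `σ : ℤ → ℝ`. -/
noncomputable def toeplitz (n : ℕ) (σ : ℤ → ℝ) : Matrix (Fin n) (Fin n) ℝ :=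
  fun i k => σ |(i : ℤ) - (k : ℤ)|

/-- `μ` is the centered Gaussian measure on `ℝⁿ` with covariance matrix `S`
(Cramér–Wold characterisation). -/
def IsCenteredGaussian {n : ℕ} (μ : Measure (Fin n → ℝ)) (S : Matrix (Fin n) (Fin n) ℝ) : Prop :=
  ∀ a : Fin n → ℝ,
    μ.map (fun x => ∑ i, a i * x i) =
      gaussianReal 0 (∑ i, ∑ k, a i * S i k * a k).toNNReal

/-- The non-interactive private estimator of the covariance coefficient `σ_j`:
`w = (X, ξ)`, `Z_i = trim_τ(X_i) + ξ_i`, and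
`σ̂_j = (1/n) ∑_{t=1}^{n-|j|} Z_t Z_{t+|j|} - 𝟙{j=0} · 8τ²/α²`. -/
noncomputable def sigmaHatNI (n : ℕ) (j : ℤ) (τ α : ℝ)
    (w : (Fin n → ℝ) × (Fin n → ℝ)) : ℝ :=
  (1 / (n : ℝ)) *
      ∑ t : Fin (n - j.natAbs),
        (trim τ (w.1 ⟨t.1, by have := t.isLt; omega⟩) + w.2 ⟨t.1, by have := t.isLt; omega⟩) *
          (trim τ (w.1 ⟨t.1 + j.natAbs, by have := t.isLt; omega⟩) +
            w.2 ⟨t.1 + j.natAbs, by have := t.isLt; omega⟩) -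
    (if j = 0 then 8 * τ ^ 2 / α ^ 2 else 0)


lemma integral_pow_four_gaussianReal (v : NNReal) :
    ∫ x, x ^ 4 ∂(gaussianReal 0 v) = 3 * (v : ℝ) ^ 2 := by
  have h := iteratedDeriv_mgf_zero (X := fun x : ℝ => x) (μ := gaussianReal 0 v) (by simp) 4
  have d : ∀ p p' : ℝ → ℝ, (∀ t, HasDerivAt p (p' t) t) →
      deriv (fun t => p t * rexp (v * t ^ 2 / 2)) =
        fun t => (p' t + p t * (v * t)) * rexp (v * t ^ 2 / 2) := by
    intro p p' hp
    funext t
    have h2 : HasDerivAt (fun t : ℝ => rexp (v * t ^ 2 / 2)) (rexp (v * t ^ 2 / 2) * (v * t)) t := by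
      have : HasDerivAt (fun t : ℝ => (v : ℝ) * t ^ 2 / 2) (v * t) t := by
        have := (((hasDerivAt_id t).pow 2).const_mul (v : ℝ)).div_const 2
        convert! this using 1
        simp
        ring
      exact this.exp
    rw [((hp t).fun_mul h2).deriv]
    ring
  have e0 : mgf (fun x : ℝ => x) (gaussianReal 0 v) =
      fun t => (fun _ => (1 : ℝ)) t * rexp (v * t ^ 2 / 2) := by
    rw [mgf_fun_id_gaussianReal]; simp
  have e1 := d (fun _ => 1) (fun _ => 0) (fun t => hasDerivAt_const t _)
  have e2 := d (fun t => 0 + 1 * (v * t)) (fun _ => v) (fun t => by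
    simpa using (hasDerivAt_id t).const_mul (v : ℝ))
  have e3 := d (fun t => v + (0 + 1 * (v * t)) * (v * t)) (fun t => 2 * v ^ 2 * t) (fun t => by
    have := ((((hasDerivAt_id t).const_mul (v : ℝ)).pow 2).const_add (v : ℝ))
    convert! this using 1
    · funext s; simp; ring
    · simp; ring)
  have e4 := d (fun t => 2 * v ^ 2 * t + (v + (0 + 1 * (v * t)) * (v * t)) * (v * t))
    (fun t => 3 * v ^ 2 + 3 * v ^ 3 * t ^ 2) (fun t => by
    have := ((hasDerivAt_id t).const_mul (3 * (v : ℝ) ^ 2)).add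
      (((hasDerivAt_id t).pow 3).const_mul ((v : ℝ) ^ 3))
    convert! this using 1
    · funext s; simp; ring
    · simp; ring)
  rw [e0, iteratedDeriv_succ, iteratedDeriv_succ, iteratedDeriv_succ, iteratedDeriv_one,
    e1, e2, e3, e4] at h
  simpa using h.symm

lemma integrable_pow_gaussianReal (v : NNReal) (k : ℕ) :
    Integrable (fun x : ℝ => x ^ k) (gaussianReal 0 v) :=
  integrable_pow_of_mem_interior_integrableExpSet (X := fun x : ℝ => x) (by simp) k

lemma integral_sq_gaussianReal (v : NNReal) :
    ∫ x, x ^ 2 ∂(gaussianReal 0 v) = v := by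
  have h := variance_fun_id_gaussianReal (μ := 0) (v := v)
  rwa [variance_of_integral_eq_zero (by fun_prop) (by simp)] at h

section CenteredGaussian

variable {n : ℕ} {μ : Measure (Fin n → ℝ)} {S : Matrix (Fin n) (Fin n) ℝ}

lemma IsCenteredGaussian.moments (h : IsCenteredGaussian μ S) (hS : S.PosSemidef)
    (a : Fin n → ℝ) :
    (Integrable (fun x => (∑ i, a i * x i) ^ 4) μ ∧
      ∫ x, (∑ i, a i * x i) ^ 4 ∂μ = 3 * (∑ i, ∑ k, a i * S i k * a k) ^ 2) ∧
    (Integrable (fun x => (∑ i, a i * x i) ^ 2) μ ∧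
      ∫ x, (∑ i, a i * x i) ^ 2 ∂μ = ∑ i, ∑ k, a i * S i k * a k) := by
  have hm : Measurable (fun x : Fin n → ℝ => ∑ i, a i * x i) := by fun_prop
  have hq : 0 ≤ ∑ i, ∑ k, a i * S i k * a k := by
    have := hS.dotProduct_mulVec_nonneg a
    simpa [dotProduct, Matrix.mulVec, Finset.mul_sum, mul_assoc] using this
  have hinteg : ∀ k : ℕ, Integrable (fun x => (∑ i, a i * x i) ^ k) μ := fun k => by
    have := integrable_pow_gaussianReal (∑ i, ∑ k, a i * S i k * a k).toNNReal k
    rw [← h a] at this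
    exact this.comp_measurable hm
  refine ⟨⟨hinteg 4, ?_⟩, ⟨hinteg 2, ?_⟩⟩
  · rw [← integral_map (φ := fun x : Fin n → ℝ => ∑ i, a i * x i) (f := fun y => y ^ 4)
      hm.aemeasurable (by fun_prop), h a, integral_pow_four_gaussianReal, Real.coe_toNNReal _ hq]
  · rw [← integral_map (φ := fun x : Fin n → ℝ => ∑ i, a i * x i) (f := fun y => y ^ 2)
      hm.aemeasurable (by fun_prop), h a, integral_sq_gaussianReal, Real.coe_toNNReal _ hq]

/-- The linear form `x ↦ p xᵢ + q xⱼ + r xₖ + s xₗ` as a sum over all coordinates. -/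
lemma sum_single_four (i j k l : Fin n) (p q r s : ℝ) (x : Fin n → ℝ) :
    ∑ m, (Pi.single i p + Pi.single j q + Pi.single k r + Pi.single l s : Fin n → ℝ) m * x m =
      p * x i + q * x j + r * x k + s * x l := by
  simp [add_mul, Finset.sum_add_distrib, Pi.single_apply]

lemma sum_sum_single_four (i j k l : Fin n) (p q r s : ℝ) :
    ∑ m, ∑ m', (Pi.single i p + Pi.single j q + Pi.single k r + Pi.single l s : Fin n → ℝ) m *
      S m m' * (Pi.single i p + Pi.single j q + Pi.single k r + Pi.single l s : Fin n → ℝ) m' =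
      p * (p * S i i + q * S i j + r * S i k + s * S i l) +
      q * (p * S j i + q * S j j + r * S j k + s * S j l) +
      r * (p * S k i + q * S k j + r * S k k + s * S k l) +
      s * (p * S l i + q * S l j + r * S l k + s * S l l) := by
  have : ∀ m, ∑ m', (Pi.single i p + Pi.single j q + Pi.single k r + Pi.single l s : Fin n → ℝ) m *
      S m m' * (Pi.single i p + Pi.single j q + Pi.single k r + Pi.single l s : Fin n → ℝ) m' =
      (Pi.single i p + Pi.single j q + Pi.single k r + Pi.single l s : Fin n → ℝ) m *
        (p * S m i + q * S m j + r * S m k + s * S m l) := fun m => by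
    rw [← sum_single_four i j k l p q r s (S m), Finset.mul_sum]
    exact Finset.sum_congr rfl fun _ _ => by ring
  simp_rw [this]
  exact sum_single_four i j k l p q r s _

lemma IsCenteredGaussian.moments_four (h : IsCenteredGaussian μ S) (hS : S.PosSemidef)
    (i j k l : Fin n) (p q r s : ℝ) :
    (Integrable (fun x => (p * x i + q * x j + r * x k + s * x l) ^ 4) μ ∧
      ∫ x, (p * x i + q * x j + r * x k + s * x l) ^ 4 ∂μ = 3 *
      (p ^ 2 * S i i + q ^ 2 * S j j + r ^ 2 * S k k + s ^ 2 * S l l +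
      2 * (p * q * S i j + p * r * S i k + p * s * S i l + q * r * S j k + q * s * S j l +
        r * s * S k l)) ^ 2) ∧
    (Integrable (fun x => (p * x i + q * x j + r * x k + s * x l) ^ 2) μ ∧
      ∫ x, (p * x i + q * x j + r * x k + s * x l) ^ 2 ∂μ =
      (p ^ 2 * S i i + q ^ 2 * S j j + r ^ 2 * S k k + s ^ 2 * S l l +
      2 * (p * q * S i j + p * r * S i k + p * s * S i l + q * r * S j k + q * s * S j l +
        r * s * S k l))) := by
  have key := h.moments hS (Pi.single i p + Pi.single j q + Pi.single k r + Pi.single l s)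
  have hsymm : ∀ a b, S a b = S b a := fun a b => by
    simpa using (hS.isHermitian.apply a b).symm
  simp_rw [sum_sum_single_four, sum_single_four] at key
  rw [hsymm j i, hsymm k i, hsymm l i, hsymm k j, hsymm l j, hsymm l k] at key
  refine ⟨⟨key.1.1, key.1.2.trans ?_⟩, ⟨key.2.1, key.2.2.trans ?_⟩⟩ <;> ring

/-- Second mixed moments of a centered Gaussian vector. -/
lemma IsCenteredGaussian.covariance (h : IsCenteredGaussian μ S) (hS : S.PosSemidef)
    (i j : Fin n) :
    Integrable (fun x => x i * x j) μ ∧ ∫ x, x i * x j ∂μ = S i j := by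
  have hp := (h.moments_four hS i j i j 1 1 0 0).2
  have hm := (h.moments_four hS i j i j 1 (-1) 0 0).2
  have e : (fun x : Fin n → ℝ => x i * x j) = fun x => (1 / 4) *
      ((1 * x i + 1 * x j + 0 * x i + 0 * x j) ^ 2 -
        (1 * x i + (-1) * x j + 0 * x i + 0 * x j) ^ 2) := by
    funext x; ring
  rw [e]
  refine ⟨(hp.1.sub hm.1).const_mul _, ?_⟩
  rw [integral_const_mul, integral_sub hp.1 hm.1, hp.2, hm.2]
  ring

/-- Isserlis' formula for fourth mixed moments of a centered Gaussian vector. -/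
lemma IsCenteredGaussian.isserlis (h : IsCenteredGaussian μ S) (hS : S.PosSemidef)
    (i j k l : Fin n) :
    Integrable (fun x => x i * x j * (x k * x l)) μ ∧
      ∫ x, x i * x j * (x k * x l) ∂μ = S i j * S k l + S i k * S j l + S i l * S j k := by
  have H := fun q r s => (h.moments_four hS i j k l 1 q r s).1
  have e : (fun x : Fin n → ℝ => x i * x j * (x k * x l)) = fun x =>
      ∑ q ∈ ({1, -1} : Finset ℝ), ∑ r ∈ ({1, -1} : Finset ℝ), ∑ s ∈ ({1, -1} : Finset ℝ),
        q * r * s / 192 * (1 * x i + q * x j + r * x k + s * x l) ^ 4 := by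
    funext x
    have : (1 : ℝ) ≠ -1 := by norm_num
    simp only [Finset.sum_pair this]
    ring
  have hi := fun q r s => (H q r s).1.const_mul (q * r * s / 192)
  rw [e]
  refine ⟨integrable_finsetSum _ fun q _ => integrable_finsetSum _ fun r _ =>
    integrable_finsetSum _ fun s _ => hi q r s, ?_⟩
  rw [integral_finsetSum _ fun q _ => integrable_finsetSum _ fun r _ =>
    integrable_finsetSum _ fun s _ => hi q r s]
  simp_rw [fun q => integral_finsetSum ({1, -1} : Finset ℝ) fun r _ =>
    integrable_finsetSum ({1, -1} : Finset ℝ) fun s _ => hi q r s,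
    fun q r => integral_finsetSum ({1, -1} : Finset ℝ) fun s _ => hi q r s,
    integral_const_mul, fun q r s => (H q r s).2]
  have : (1 : ℝ) ≠ -1 := by norm_num
  simp only [Finset.sum_pair this]
  ring

end CenteredGaussian

section Laplace

variable {b : ℝ}

lemma integral_abs_pow_mul_exp (hb : 0 < b) (k : ℕ) :
    ∫ x : ℝ, |x| ^ k * rexp (-|x| / b) = 2 * (b ^ (k + 1) * k.factorial) := by
  rw [integral_comp_abs (f := fun x => x ^ k * rexp (-x / b))]
  congr 1
  have h := Real.integral_rpow_mul_exp_neg_mul_Ioi (a := k + 1) (r := 1 / b) (by positivity)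
    (by positivity)
  rw [Real.Gamma_nat_eq_factorial, one_div_one_div] at h
  rw [← Real.rpow_natCast b (k + 1)]
  push_cast
  rw [← h]
  refine setIntegral_congr_fun measurableSet_Ioi fun t _ => ?_
  simp only [add_sub_cancel_right, Real.rpow_natCast]
  congr 2
  ring

lemma integrable_abs_pow_mul_exp (hb : 0 < b) (k : ℕ) :
    Integrable fun x : ℝ => |x| ^ k * rexp (-|x| / b) := by
  by_contra h
  have h1 := integral_abs_pow_mul_exp hb k
  rw [integral_undef h] at h1
  have : 0 < 2 * (b ^ (k + 1) * k.factorial) := by positivity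
  linarith

lemma toReal_laplace_density (hb : 0 < b) (x : ℝ) :
    (ENNReal.ofReal ((1 / (2 * b)) * rexp (-|x - 0| / b))).toReal =
      (1 / (2 * b)) * rexp (-|x| / b) := by
  rw [ENNReal.toReal_ofReal (by positivity), sub_zero]

lemma isProbabilityMeasure_laplace (hb : 0 < b) : IsProbabilityMeasure (laplace 0 b) := by
  refine ⟨?_⟩
  rw [laplace, withDensity_apply _ MeasurableSet.univ, Measure.restrict_univ]
  have hi := (integrable_abs_pow_mul_exp hb 0).const_mul (1 / (2 * b))
  have h := integral_abs_pow_mul_exp hb 0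
  simp only [pow_zero, one_mul, zero_add, pow_one, Nat.factorial_zero, Nat.cast_one,
    mul_one] at hi h
  simp only [sub_zero]
  rw [← ofReal_integral_eq_lintegral_ofReal hi
    (Filter.Eventually.of_forall fun x => by positivity), integral_const_mul, h]
  field_simp
  simp

lemma laplace_abs_pow (hb : 0 < b) (k : ℕ) :
    Integrable (fun x : ℝ => |x| ^ k) (laplace 0 b) ∧
      ∫ x, |x| ^ k ∂(laplace 0 b) = k.factorial * b ^ k := by
  have hm : Measurable fun z : ℝ => ENNReal.ofReal ((1 / (2 * b)) * rexp (-|z - 0| / b)) := by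
    fun_prop
  have hlt : ∀ᵐ z : ℝ, ENNReal.ofReal ((1 / (2 * b)) * rexp (-|z - 0| / b)) < ⊤ :=
    Filter.Eventually.of_forall fun _ => ENNReal.ofReal_lt_top
  have e : ∀ x : ℝ, (1 / (2 * b)) * rexp (-|x| / b) * |x| ^ k =
      (1 / (2 * b)) * (|x| ^ k * rexp (-|x| / b)) := fun x => by ring
  constructor
  · rw [laplace, integrable_withDensity_iff_integrable_smul' hm hlt]
    simp_rw [toReal_laplace_density hb, smul_eq_mul, e]
    exact (integrable_abs_pow_mul_exp hb k).const_mul _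
  · rw [laplace, integral_withDensity_eq_integral_toReal_smul hm hlt]
    simp_rw [toReal_laplace_density hb, smul_eq_mul, e]
    rw [integral_const_mul, integral_abs_pow_mul_exp hb]
    field_simp
    ring

lemma laplace_sq (hb : 0 < b) :
    Integrable (fun x : ℝ => x ^ 2) (laplace 0 b) ∧ ∫ x, x ^ 2 ∂(laplace 0 b) = 2 * b ^ 2 := by
  simpa [sq_abs, Nat.factorial] using laplace_abs_pow hb 2

lemma laplace_pow_four (hb : 0 < b) :
    Integrable (fun x : ℝ => x ^ 4) (laplace 0 b) ∧ ∫ x, x ^ 4 ∂(laplace 0 b) = 24 * b ^ 4 := by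
  have e : ∀ x : ℝ, |x| ^ 4 = x ^ 4 := fun x => Even.pow_abs (by decide) x
  simpa [e, Nat.factorial] using laplace_abs_pow hb 4

lemma measurePreserving_neg_laplace :
    MeasurePreserving (fun x : ℝ => -x) (laplace 0 b) (laplace 0 b) := by
  refine ⟨measurable_neg, ?_⟩
  ext s hs
  rw [Measure.map_apply measurable_neg hs, laplace, withDensity_apply _ (measurable_neg hs),
    withDensity_apply _ hs]
  have := (Measure.measurePreserving_neg (volume : Measure ℝ)).setLIntegral_comp_preimage_emb
    (MeasurableEquiv.neg ℝ).measurableEmbedding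
    (fun z => ENNReal.ofReal ((1 / (2 * b)) * rexp (-|z - 0| / b))) s
  rw [← this]
  simp [abs_neg]

end Laplace

section Noise

variable {n : ℕ} {b : ℝ} (μ : Measure (Fin n → ℝ)) [IsProbabilityMeasure μ]

lemma MeasureTheory.MeasurePreserving.integral_comp_of_measurable {Ω Ω' : Type*}
    [MeasurableSpace Ω] [MeasurableSpace Ω'] {P : Measure Ω} {Q : Measure Ω'} {f : Ω → Ω'}
    (hf : MeasurePreserving f P Q) {g : Ω' → ℝ} (hg : Measurable g) :
    ∫ w, g (f w) ∂P = ∫ y, g y ∂Q := by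
  have h := integral_map (μ := P) (f := g) hf.measurable.aemeasurable hg.aestronglyMeasurable
  rw [hf.map_eq] at h
  exact h.symm

/-- Changing the sign of the `i`-th noise variable. -/
def flipNoise (i : Fin n) (w : (Fin n → ℝ) × (Fin n → ℝ)) : (Fin n → ℝ) × (Fin n → ℝ) :=
  (w.1, fun k => if k = i then -w.2 k else w.2 k)

lemma measurePreserving_flipNoise (hb : 0 < b) (i : Fin n) :
    MeasurePreserving (flipNoise i) (μ.prod (Measure.pi fun _ : Fin n => laplace 0 b))
      (μ.prod (Measure.pi fun _ : Fin n => laplace 0 b)) := by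
  have := isProbabilityMeasure_laplace hb
  refine (MeasurePreserving.id μ).prod (measurePreserving_pi (fun _ => laplace 0 b)
    (fun _ => laplace 0 b) (f := fun k x => if k = i then -x else x) fun k => ?_)
  by_cases h : k = i
  · simpa [h] using measurePreserving_neg_laplace
  · simp only [h, if_false]
    exact MeasurePreserving.id _

lemma integral_eq_zero_of_flipNoise (hb : 0 < b) (i : Fin n)
    {F : (Fin n → ℝ) × (Fin n → ℝ) → ℝ} (hF : Measurable F)
    (hodd : ∀ w, F (flipNoise i w) = -F w) :
    ∫ w, F w ∂(μ.prod (Measure.pi fun _ : Fin n => laplace 0 b)) = 0 := by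
  have h := (measurePreserving_flipNoise μ hb i).integral_comp_of_measurable hF
  simp_rw [hodd, integral_neg] at h
  linarith

/-- A sum of pairwise orthogonal, square-integrable variables with second moments at most `K`. -/
lemma integral_sq_sum_le_of_orthogonal {Ω : Type*} [MeasurableSpace Ω] {P : Measure Ω}
    {m : ℕ} (Y : Fin m → Ω → ℝ) (K : ℝ) (hY : ∀ t, MemLp (Y t) 2 P)
    (horth : ∀ s t, s ≠ t → ∫ w, Y s w * Y t w ∂P = 0)
    (hK : ∀ t, ∫ w, Y t w ^ 2 ∂P ≤ K) :
    ∫ w, (∑ t, Y t w) ^ 2 ∂P ≤ m * K := by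
  have hinteg : ∀ s t, Integrable (fun w => Y s w * Y t w) P := fun s t =>
    (hY s).integrable_mul (hY t)
  simp_rw [sq, Finset.sum_mul_sum]
  rw [integral_finsetSum _ fun s _ => integrable_finsetSum _ fun t _ => hinteg s t]
  calc ∑ s, ∫ w, ∑ t, Y s w * Y t w ∂P ≤ ∑ _s : Fin m, K := by
        refine Finset.sum_le_sum fun s _ => ?_
        rw [integral_finsetSum _ fun t _ => hinteg s t,
          Finset.sum_eq_single_of_mem s (Finset.mem_univ s) fun t _ ht => horth s t ht.symm]
        simpa [sq] using hK s
    _ = m * K := by simp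

lemma measurePreserving_noise (hb : 0 < b) (i : Fin n) :
    MeasurePreserving (fun w : (Fin n → ℝ) × (Fin n → ℝ) => w.2 i)
      (μ.prod (Measure.pi fun _ : Fin n => laplace 0 b)) (laplace 0 b) := by
  have := isProbabilityMeasure_laplace hb
  exact (measurePreserving_eval (fun _ : Fin n => laplace 0 b) i).comp measurePreserving_snd

lemma integral_noise (hb : 0 < b) (i : Fin n) {g : ℝ → ℝ} (hg : Measurable g) :
    ∫ w, g (w.2 i) ∂(μ.prod (Measure.pi fun _ : Fin n => laplace 0 b)) =
      ∫ x, g x ∂(laplace 0 b) :=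
  (measurePreserving_noise μ hb i).integral_comp_of_measurable hg

lemma integrable_noise (hb : 0 < b) (i : Fin n) {g : ℝ → ℝ} (hg : Integrable g (laplace 0 b)) :
    Integrable (fun w => g (w.2 i)) (μ.prod (Measure.pi fun _ : Fin n => laplace 0 b)) :=
  (measurePreserving_noise μ hb i).integrable_comp_of_integrable hg

lemma memLp_two_of_sq_le {Ω : Type*} [MeasurableSpace Ω] {P : Measure Ω} {f g : Ω → ℝ}
    (hf : Measurable f) (hg : Integrable g P) (h : ∀ w, f w ^ 2 ≤ g w) : MemLp f 2 P := by
  rw [memLp_two_iff_integrable_sq hf.aestronglyMeasurable]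
  refine hg.mono' (hf.pow_const 2).aestronglyMeasurable (Filter.Eventually.of_forall fun w => ?_)
  rw [Real.norm_of_nonneg (sq_nonneg _)]
  exact h w

lemma integral_sq_le {Ω : Type*} [MeasurableSpace Ω] {P : Measure Ω} {f g : Ω → ℝ}
    (hf : Measurable f) (hg : Integrable g P) (h : ∀ w, f w ^ 2 ≤ g w) :
    ∫ w, f w ^ 2 ∂P ≤ ∫ w, g w ∂P :=
  integral_mono (memLp_two_of_sq_le hf hg h).integrable_sq hg h

@[fun_prop]
lemma measurable_trim (c : ℝ) : Measurable (trim c) := by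
  unfold trim; fun_prop

lemma abs_trim_le {c : ℝ} (hc : 0 ≤ c) (x : ℝ) : |trim c x| ≤ c := by
  rw [abs_le, trim]
  exact ⟨le_max_left _ _, max_le (by linarith) (min_le_right _ _)⟩

/-- Cross terms between the truncated signal and the noise. -/
lemma integral_sq_sum_trim_mul_noise_le (hb : 0 < b) {m : ℕ} (p q : Fin m → Fin n)
    (hq : Function.Injective q) {c : ℝ} (hc : 0 ≤ c) :
    MemLp (fun w => ∑ t, trim c (w.1 (p t)) * w.2 (q t)) 2
        (μ.prod (Measure.pi fun _ : Fin n => laplace 0 b)) ∧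
      ∫ w, (∑ t, trim c (w.1 (p t)) * w.2 (q t)) ^ 2
        ∂(μ.prod (Measure.pi fun _ : Fin n => laplace 0 b)) ≤ m * (c ^ 2 * (2 * b ^ 2)) := by
  have hinteg : ∀ t, Integrable (fun w : (Fin n → ℝ) × (Fin n → ℝ) => c ^ 2 * w.2 (q t) ^ 2)
      (μ.prod (Measure.pi fun _ : Fin n => laplace 0 b)) := fun t =>
    (integrable_noise μ hb (q t) (laplace_sq hb).1).const_mul _
  have hle : ∀ t (w : (Fin n → ℝ) × (Fin n → ℝ)),
      (trim c (w.1 (p t)) * w.2 (q t)) ^ 2 ≤ c ^ 2 * w.2 (q t) ^ 2 := fun t w => by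
    rw [mul_pow]
    exact mul_le_mul_of_nonneg_right (sq_le_sq' (abs_le.1 (abs_trim_le hc _)).1
      (abs_le.1 (abs_trim_le hc _)).2) (sq_nonneg _)
  have hmeas : ∀ t, Measurable fun w : (Fin n → ℝ) × (Fin n → ℝ) =>
      trim c (w.1 (p t)) * w.2 (q t) := fun t => by fun_prop
  have hL := fun t => memLp_two_of_sq_le (hmeas t) (hinteg t) (hle t)
  refine ⟨memLp_finsetSum _ fun t _ => hL t, integral_sq_sum_le_of_orthogonal _ _ hL ?_ ?_⟩
  · intro s t hst
    refine integral_eq_zero_of_flipNoise μ hb (q s) ((hmeas s).mul (hmeas t)) fun w => ?_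
    simp [flipNoise, hq.ne hst.symm]
  · intro t
    refine (integral_sq_le (hmeas t) (hinteg t) (hle t)).trans_eq ?_
    rw [integral_const_mul, integral_noise μ hb (q t) (g := fun x => x ^ 2) (by fun_prop),
      (laplace_sq hb).2]

/-- Products of distinct noise variables at a fixed positive lag. -/
lemma integral_sq_sum_noise_mul_noise_le (hb : 0 < b) {m J : ℕ} (hJ : 0 < J)
    (p q : Fin m → Fin n) (hp : ∀ t, (p t : ℕ) = t) (hq : ∀ t, (q t : ℕ) = t + J) :
    MemLp (fun w => ∑ t, w.2 (p t) * w.2 (q t)) 2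
        (μ.prod (Measure.pi fun _ : Fin n => laplace 0 b)) ∧
      ∫ w, (∑ t, w.2 (p t) * w.2 (q t)) ^ 2
        ∂(μ.prod (Measure.pi fun _ : Fin n => laplace 0 b)) ≤ m * (28 * b ^ 4) := by
  have hint4 : ∀ i, Integrable (fun w : (Fin n → ℝ) × (Fin n → ℝ) => w.2 i ^ 4)
      (μ.prod (Measure.pi fun _ : Fin n => laplace 0 b)) := fun i =>
    integrable_noise μ hb i (laplace_pow_four hb).1
  have hinteg : ∀ t, Integrable (fun w : (Fin n → ℝ) × (Fin n → ℝ) =>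
      (1 / 2) * (w.2 (p t) ^ 4 + w.2 (q t) ^ 4))
      (μ.prod (Measure.pi fun _ : Fin n => laplace 0 b)) := fun t =>
    ((hint4 _).add (hint4 _)).const_mul _
  have hle : ∀ t (w : (Fin n → ℝ) × (Fin n → ℝ)),
      (w.2 (p t) * w.2 (q t)) ^ 2 ≤ (1 / 2) * (w.2 (p t) ^ 4 + w.2 (q t) ^ 4) := fun t w => by
    nlinarith [sq_nonneg (w.2 (p t) ^ 2 - w.2 (q t) ^ 2)]
  have hmeas : ∀ t, Measurable fun w : (Fin n → ℝ) × (Fin n → ℝ) =>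
      w.2 (p t) * w.2 (q t) := fun t => by fun_prop
  have hL := fun t => memLp_two_of_sq_le (hmeas t) (hinteg t) (hle t)
  have hlt : ∀ s t : Fin m, s < t → ∫ w, (w.2 (p s) * w.2 (q s)) * (w.2 (p t) * w.2 (q t))
      ∂(μ.prod (Measure.pi fun _ : Fin n => laplace 0 b)) = 0 := fun s t hst => by
    refine integral_eq_zero_of_flipNoise μ hb (p s) ((hmeas s).mul (hmeas t)) fun w => ?_
    have hst' : (s : ℕ) < t := hst
    have h1 : q s ≠ p s := fun h => by have := congrArg Fin.val h; rw [hp, hq] at this; omega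
    have h2 : p t ≠ p s := fun h => by have := congrArg Fin.val h; rw [hp, hp] at this; omega
    have h3 : q t ≠ p s := fun h => by have := congrArg Fin.val h; rw [hp, hq] at this; omega
    simp [flipNoise, h1, h2, h3]
  refine ⟨memLp_finsetSum _ fun t _ => hL t, integral_sq_sum_le_of_orthogonal _ _ hL ?_ ?_⟩
  · intro s t hst
    rcases lt_or_gt_of_ne hst with h | h
    · exact hlt s t h
    · refine Eq.trans ?_ (hlt t s h)
      exact integral_congr_ae (Filter.Eventually.of_forall fun w => mul_comm (_ : ℝ) _)
  · intro t
    refine (integral_sq_le (hmeas t) (hinteg t) (hle t)).trans ?_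
    rw [integral_const_mul, integral_add (hint4 _) (hint4 _),
      integral_noise μ hb (p t) (g := fun x => x ^ 4) (by fun_prop),
      integral_noise μ hb (q t) (g := fun x => x ^ 4) (by fun_prop), (laplace_pow_four hb).2]
    nlinarith [pow_pos hb 4]

/-- Centered squares of the noise variables. -/
lemma integral_sq_sum_noise_sq_sub_le (hb : 0 < b) {m : ℕ}
    (p : Fin m → Fin n) (hp : Function.Injective p) :
    MemLp (fun w => ∑ t, (w.2 (p t) ^ 2 - 2 * b ^ 2)) 2
        (μ.prod (Measure.pi fun _ : Fin n => laplace 0 b)) ∧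
      ∫ w, (∑ t, (w.2 (p t) ^ 2 - 2 * b ^ 2)) ^ 2
        ∂(μ.prod (Measure.pi fun _ : Fin n => laplace 0 b)) ≤ m * (28 * b ^ 4) := by
  have := isProbabilityMeasure_laplace hb
  have hint4 : ∀ i, Integrable (fun w : (Fin n → ℝ) × (Fin n → ℝ) => w.2 i ^ 4)
      (μ.prod (Measure.pi fun _ : Fin n => laplace 0 b)) := fun i =>
    integrable_noise μ hb i (laplace_pow_four hb).1
  have hinteg : ∀ t, Integrable (fun w : (Fin n → ℝ) × (Fin n → ℝ) =>
      w.2 (p t) ^ 4 + 4 * b ^ 4)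
      (μ.prod (Measure.pi fun _ : Fin n => laplace 0 b)) := fun t =>
    (hint4 _).add (integrable_const _)
  have hle : ∀ t (w : (Fin n → ℝ) × (Fin n → ℝ)),
      (w.2 (p t) ^ 2 - 2 * b ^ 2) ^ 2 ≤ w.2 (p t) ^ 4 + 4 * b ^ 4 := fun t w => by
    nlinarith [mul_nonneg (sq_nonneg (w.2 (p t))) (sq_nonneg b)]
  have hmeas : ∀ t, Measurable fun w : (Fin n → ℝ) × (Fin n → ℝ) =>
      w.2 (p t) ^ 2 - 2 * b ^ 2 := fun t => by fun_prop
  have hL := fun t => memLp_two_of_sq_le (hmeas t) (hinteg t) (hle t)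
  have hzero : ∫ x, (x ^ 2 - 2 * b ^ 2) ∂(laplace 0 b) = 0 := by
    rw [integral_sub (laplace_sq hb).1 (integrable_const _), (laplace_sq hb).2]
    simp
  refine ⟨memLp_finsetSum _ fun t _ => hL t, integral_sq_sum_le_of_orthogonal _ _ hL ?_ ?_⟩
  · intro s t hst
    have hind : IndepFun (fun y : Fin n → ℝ => y (p s) ^ 2 - 2 * b ^ 2)
        (fun y : Fin n → ℝ => y (p t) ^ 2 - 2 * b ^ 2)
        (Measure.pi fun _ : Fin n => laplace 0 b) :=
      (iIndepFun_pi (μ := fun _ : Fin n => laplace 0 b)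
        (X := fun _ (x : ℝ) => x ^ 2 - 2 * b ^ 2) (fun _ => by fun_prop)).indepFun (hp.ne hst)
    have hmul := hind.integral_fun_mul_eq_mul_integral
      (Measurable.aestronglyMeasurable (by fun_prop))
      (Measurable.aestronglyMeasurable (by fun_prop))
    have he := integral_comp_eval (μ := fun _ : Fin n => laplace 0 b) (i := p s)
      (f := fun x : ℝ => x ^ 2 - 2 * b ^ 2) (by fun_prop)
    rw [he, hzero, zero_mul] at hmul
    have hsnd := measurePreserving_snd (μ := μ) (ν := Measure.pi fun _ : Fin n => laplace 0 b)
    exact (hsnd.integral_comp_of_measurable (g := fun y : Fin n → ℝ =>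
      (y (p s) ^ 2 - 2 * b ^ 2) * (y (p t) ^ 2 - 2 * b ^ 2)) (by fun_prop)).trans hmul
  · intro t
    refine (integral_sq_le (hmeas t) (hinteg t) (hle t)).trans_eq ?_
    rw [integral_add (hint4 _) (integrable_const _),
      integral_noise μ hb (p t) (g := fun x => x ^ 4) (by fun_prop), (laplace_pow_four hb).2]
    simp
    ring

end Noise

section Signal

variable {n : ℕ} {μ : Measure (Fin n → ℝ)} {S : Matrix (Fin n) (Fin n) ℝ}

lemma IsCenteredGaussian.map_eval (h : IsCenteredGaussian μ S) (i : Fin n) :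
    μ.map (fun x => x i) = gaussianReal 0 (S i i).toNNReal := by
  have := h (Pi.single i 1)
  simpa [Pi.single_apply] using this

lemma IsCenteredGaussian.exp_moment (h : IsCenteredGaussian μ S) (hS : S.PosSemidef)
    (i : Fin n) (s : ℝ) :
    Integrable (fun x => rexp (s * x i)) μ ∧
      ∫ x, rexp (s * x i) ∂μ = rexp (S i i * s ^ 2 / 2) := by
  constructor
  · have := integrable_exp_mul_gaussianReal (μ := 0) (v := (S i i).toNNReal) s
    rw [← h.map_eval i] at this
    exact this.comp_measurable (measurable_pi_apply i)
  · have := mgf_gaussianReal (h.map_eval i) s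
    simpa [mgf, Real.coe_toNNReal _ (hS.diag_nonneg (i := i))] using this

lemma exists_trim_eq_mul {c : ℝ} (hc : 0 ≤ c) (x : ℝ) :
    ∃ θ : ℝ, 0 ≤ θ ∧ θ ≤ 1 ∧ trim c x = θ * x := by
  rcases le_total x (-c) with h | h
  · rcases eq_or_lt_of_le hc with rfl | hc'
    · exact ⟨0, le_rfl, zero_le_one, by simp [trim]⟩
    · have hx : x < 0 := by linarith
      refine ⟨-c / x, div_nonneg_of_nonpos (by linarith) hx.le, ?_, ?_⟩
      · rw [div_le_one_of_neg hx]; exact h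
      · rw [div_mul_cancel₀ _ hx.ne, trim, min_eq_left (by linarith), max_eq_left h]
  · rcases le_total x c with h' | h'
    · exact ⟨1, zero_le_one, le_rfl, by rw [trim, min_eq_left h', max_eq_right h, one_mul]⟩
    · rcases eq_or_lt_of_le hc with rfl | hc'
      · exact ⟨0, le_rfl, zero_le_one, by simp [trim]⟩
      · have hx : 0 < x := by linarith
        refine ⟨c / x, by positivity, ?_, ?_⟩
        · rw [div_le_one hx]; exact h'
        · rw [div_mul_cancel₀ _ hx.ne', trim, min_eq_right h', max_eq_right (by linarith)]

lemma trim_eq_self {c x : ℝ} (h : |x| ≤ c) : trim c x = x := by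
  rw [abs_le] at h
  rw [trim, min_eq_left h.2, max_eq_right h.1]

/-- Exponential bound for the fourth power on the tail `c < |x|`. -/
lemma pow_four_le_of_lt_abs {c x l : ℝ} (hl : 0 ≤ l) (h : c < |x|) :
    x ^ 4 ≤ 24 * rexp (-(l * c)) * (rexp ((l + 1) * x) + rexp (-(l + 1) * x)) := by
  have h1 := Real.pow_div_factorial_le_exp |x| (abs_nonneg x) 4
  rw [Even.pow_abs (by decide)] at h1
  have h2 : x ^ 4 ≤ 24 * rexp |x| := by
    norm_num [Nat.factorial] at h1
    linarith
  have h3 : rexp |x| ≤ rexp (-(l * c)) * rexp ((l + 1) * |x|) := by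
    rw [← Real.exp_add]
    refine Real.exp_le_exp.2 ?_
    nlinarith
  have h4 : rexp ((l + 1) * |x|) ≤ rexp ((l + 1) * x) + rexp (-(l + 1) * x) := by
    rcases abs_cases x with ⟨hx, _⟩ | ⟨hx, _⟩ <;> rw [hx]
    · linarith [Real.exp_pos (-(l + 1) * x)]
    · rw [mul_neg, ← neg_mul]
      linarith [Real.exp_pos ((l + 1) * x)]
  calc x ^ 4 ≤ 24 * rexp |x| := h2
    _ ≤ 24 * (rexp (-(l * c)) * (rexp ((l + 1) * x) + rexp (-(l + 1) * x))) := by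
        gcongr
        exact h3.trans (by gcongr)
    _ = _ := by ring

lemma trim_mul_trim_sub_sq_le {c l N : ℝ} (hc : 0 ≤ c) (hl : 0 ≤ l) (hN : 0 < N) (x y : ℝ) :
    (trim c x * trim c y - x * y) ^ 2 ≤
      N * (24 * rexp (-(l * c)) * (rexp ((l + 1) * x) + rexp (-(l + 1) * x)) +
        24 * rexp (-(l * c)) * (rexp ((l + 1) * y) + rexp (-(l + 1) * y))) +
      N⁻¹ * (x ^ 4 + y ^ 4) := by
  obtain ⟨θ, h0, h1, hx⟩ := exists_trim_eq_mul hc x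
  obtain ⟨φ, k0, k1, hy⟩ := exists_trim_eq_mul hc y
  set R : ℝ → ℝ := fun x =>
    24 * rexp (-(l * c)) * (rexp ((l + 1) * x) + rexp (-(l + 1) * x)) with hR
  have hRpos : ∀ x, 0 ≤ R x := fun x => by positivity
  change _ ≤ N * (R x + R y) + _
  have hprod : (trim c x * trim c y - x * y) ^ 2 ≤ x ^ 2 * y ^ 2 := by
    have h2 : (θ * φ - 1) ^ 2 ≤ 1 := by
      have : θ * φ ≤ 1 := mul_le_one₀ h1 k0 k1
      nlinarith [mul_nonneg h0 k0]
    calc (trim c x * trim c y - x * y) ^ 2 = (θ * φ - 1) ^ 2 * (x ^ 2 * y ^ 2) := by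
          rw [hx, hy]; ring
      _ ≤ 1 * (x ^ 2 * y ^ 2) := by gcongr
      _ = _ := one_mul _
  have amgm : ∀ a b : ℝ, a ^ 2 * b ^ 2 ≤ N * a ^ 4 + N⁻¹ * b ^ 4 := fun a b => by
    have h3 := sq_nonneg (N * a ^ 2 - b ^ 2)
    have h4 : N * a ^ 4 + N⁻¹ * b ^ 4 - 2 * (a ^ 2 * b ^ 2) =
        N⁻¹ * (N * a ^ 2 - b ^ 2) ^ 2 := by field_simp; ring
    have h5 : 0 ≤ N⁻¹ * (N * a ^ 2 - b ^ 2) ^ 2 := by positivity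
    nlinarith [mul_nonneg (sq_nonneg a) (sq_nonneg b)]
  have tail : ∀ a b : ℝ, c < |a| →
      a ^ 2 * b ^ 2 ≤ N * (R a + R b) + N⁻¹ * (a ^ 4 + b ^ 4) := fun a b hab => by
    refine (amgm a b).trans (add_le_add ?_ ?_)
    · exact mul_le_mul_of_nonneg_left
        ((pow_four_le_of_lt_abs hl hab).trans (le_add_of_nonneg_right (hRpos b))) hN.le
    · exact mul_le_mul_of_nonneg_left (le_add_of_nonneg_left (by positivity)) (by positivity)
  by_cases hxc : c < |x|
  · exact hprod.trans (tail x y hxc)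
  by_cases hyc : c < |y|
  · refine hprod.trans ?_
    have := tail y x hyc
    linarith
  · rw [trim_eq_self (not_lt.1 hxc), trim_eq_self (not_lt.1 hyc), sub_self, zero_pow two_ne_zero]
    have := hRpos x
    have := hRpos y
    positivity

/-- The truncation error of a sum of products. -/
lemma IsCenteredGaussian.integral_sq_sum_trim_sub_le (h : IsCenteredGaussian μ S)
    (hS : S.PosSemidef) {m : ℕ} (p q : Fin m → Fin n) {c l N v : ℝ}
    (hc : 0 ≤ c) (hl : 0 ≤ l) (hN : 0 < N) (hv : ∀ i, S i i ≤ v) :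
    MemLp (fun x => ∑ t, (trim c (x (p t)) * trim c (x (q t)) - x (p t) * x (q t))) 2 μ ∧
      ∫ x, (∑ t, (trim c (x (p t)) * trim c (x (q t)) - x (p t) * x (q t))) ^ 2 ∂μ ≤
        m * (m * (N * (96 * rexp (-(l * c) + v * (l + 1) ^ 2 / 2)) + N⁻¹ * (6 * v ^ 2))) := by
  set R : ℝ → ℝ := fun x =>
    24 * rexp (-(l * c)) * (rexp ((l + 1) * x) + rexp (-(l + 1) * x)) with hR
  have hRi : ∀ i, Integrable (fun x => R (x i)) μ := fun i =>
    ((h.exp_moment hS i (l + 1)).1.add (h.exp_moment hS i (-(l + 1))).1).const_mul _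
  have hRle : ∀ i, ∫ x, R (x i) ∂μ ≤ 48 * rexp (-(l * c) + v * (l + 1) ^ 2 / 2) := fun i => by
    simp only [hR]
    rw [integral_const_mul, integral_add (h.exp_moment hS i (l + 1)).1
      (h.exp_moment hS i (-(l + 1))).1, (h.exp_moment hS i (l + 1)).2,
      (h.exp_moment hS i (-(l + 1))).2, Real.exp_add, neg_sq]
    have : rexp (S i i * (l + 1) ^ 2 / 2) ≤ rexp (v * (l + 1) ^ 2 / 2) := by
      refine Real.exp_le_exp.2 ?_
      have := hv i
      gcongr
    calc _ = 48 * (rexp (-(l * c)) * rexp (S i i * (l + 1) ^ 2 / 2)) := by ring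
      _ ≤ _ := by gcongr
  have h4 : ∀ i, Integrable (fun x : Fin n → ℝ => x i ^ 4) μ ∧ ∫ x, x i ^ 4 ∂μ ≤ 3 * v ^ 2 :=
    fun i => by
      have e : (fun x : Fin n → ℝ => x i ^ 4) = fun x => x i * x i * (x i * x i) := by
        funext x; ring
      rw [e]
      refine ⟨(h.isserlis hS i i i i).1, ?_⟩
      rw [(h.isserlis hS i i i i).2]
      nlinarith [hv i, hS.diag_nonneg (i := i)]
  have hg : ∀ t, Integrable (fun x : Fin n → ℝ => N * (R (x (p t)) + R (x (q t))) +
      N⁻¹ * (x (p t) ^ 4 + x (q t) ^ 4)) μ := fun t =>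
    (((hRi _).fun_add (hRi _)).const_mul _).add (((h4 _).1.fun_add (h4 _).1).const_mul _)
  have hmeas : ∀ t, Measurable fun x : Fin n → ℝ =>
      trim c (x (p t)) * trim c (x (q t)) - x (p t) * x (q t) := fun t => by fun_prop
  have hle := fun t (x : Fin n → ℝ) => trim_mul_trim_sub_sq_le hc hl hN (x (p t)) (x (q t))
  have hL := fun t => memLp_two_of_sq_le (hmeas t) (hg t) (hle t)
  have hterm : ∀ t, ∫ x, (trim c (x (p t)) * trim c (x (q t)) - x (p t) * x (q t)) ^ 2 ∂μ ≤
      N * (96 * rexp (-(l * c) + v * (l + 1) ^ 2 / 2)) + N⁻¹ * (6 * v ^ 2) := fun t => by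
    refine (integral_sq_le (hmeas t) (hg t) (hle t)).trans ?_
    rw [integral_add (((hRi _).fun_add (hRi _)).const_mul _) (((h4 _).1.fun_add (h4 _).1).const_mul _),
      integral_const_mul, integral_const_mul, integral_add (hRi _) (hRi _),
      integral_add (h4 _).1 (h4 _).1]
    refine add_le_add (mul_le_mul_of_nonneg_left ?_ hN.le)
      (mul_le_mul_of_nonneg_left ?_ (by positivity))
    · linarith [hRle (p t), hRle (q t)]
    · linarith [(h4 (p t)).2, (h4 (q t)).2]
  have hsum := memLp_finsetSum Finset.univ fun t _ => hL t
  refine ⟨hsum, ?_⟩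
  calc ∫ x, (∑ t, (trim c (x (p t)) * trim c (x (q t)) - x (p t) * x (q t))) ^ 2 ∂μ
      ≤ ∫ x, m * ∑ t, (trim c (x (p t)) * trim c (x (q t)) - x (p t) * x (q t)) ^ 2 ∂μ := by
        refine integral_mono hsum.integrable_sq
          ((integrable_finsetSum _ fun t _ => (hL t).integrable_sq).const_mul _) fun x => ?_
        simpa using sq_sum_le_card_mul_sum_sq (s := Finset.univ)
          (f := fun t => trim c (x (p t)) * trim c (x (q t)) - x (p t) * x (q t))
    _ = m * ∑ t, ∫ x, (trim c (x (p t)) * trim c (x (q t)) - x (p t) * x (q t)) ^ 2 ∂μ := by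
        rw [integral_const_mul, integral_finsetSum _ fun t _ => (hL t).integrable_sq]
    _ ≤ m * ∑ _t : Fin m, (N * (96 * rexp (-(l * c) + v * (l + 1) ^ 2 / 2)) +
          N⁻¹ * (6 * v ^ 2)) := by
        gcongr with t
        exact hterm t
    _ = _ := by rw [Finset.sum_const, Finset.card_univ, Fintype.card_fin, nsmul_eq_mul]

/-- The mean square of a centered sum of products of Gaussian variables. -/
lemma IsCenteredGaussian.integral_sq_sum_sub (h : IsCenteredGaussian μ S) [IsProbabilityMeasure μ]
    (hS : S.PosSemidef) {m : ℕ} (p q : Fin m → Fin n) :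
    MemLp (fun x => ∑ t, (x (p t) * x (q t) - S (p t) (q t))) 2 μ ∧
      ∫ x, (∑ t, (x (p t) * x (q t) - S (p t) (q t))) ^ 2 ∂μ =
        ∑ s, ∑ t, (S (p s) (p t) * S (q s) (q t) + S (p s) (q t) * S (q s) (p t)) := by
  have h4 := fun s t => h.isserlis hS (p s) (q s) (p t) (q t)
  have h2 := fun t => h.covariance hS (p t) (q t)
  have e : ∀ s t, (fun x : Fin n → ℝ =>
      (x (p s) * x (q s) - S (p s) (q s)) * (x (p t) * x (q t) - S (p t) (q t))) =
      fun x => (x (p s) * x (q s) * (x (p t) * x (q t)) - S (p t) (q t) * (x (p s) * x (q s))) -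
        (S (p s) (q s) * (x (p t) * x (q t)) - S (p s) (q s) * S (p t) (q t)) := fun s t => by
    funext x; ring
  have hi1 : ∀ s t, Integrable (fun x : Fin n → ℝ => x (p s) * x (q s) * (x (p t) * x (q t)) -
      S (p t) (q t) * (x (p s) * x (q s))) μ := fun s t => (h4 s t).1.sub ((h2 s).1.const_mul _)
  have hi2 : ∀ s t, Integrable (fun x : Fin n → ℝ => S (p s) (q s) * (x (p t) * x (q t)) -
      S (p s) (q s) * S (p t) (q t)) μ := fun s t =>
    ((h2 t).1.const_mul _).sub (integrable_const _)
  have hinteg : ∀ s t, Integrable (fun x : Fin n → ℝ =>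
      (x (p s) * x (q s) - S (p s) (q s)) * (x (p t) * x (q t) - S (p t) (q t))) μ := fun s t => by
    rw [e]; exact (hi1 s t).sub (hi2 s t)
  have hval : ∀ s t, ∫ x, (x (p s) * x (q s) - S (p s) (q s)) *
      (x (p t) * x (q t) - S (p t) (q t)) ∂μ =
      S (p s) (p t) * S (q s) (q t) + S (p s) (q t) * S (q s) (p t) := fun s t => by
    rw [e, integral_sub (hi1 s t) (hi2 s t),
      integral_sub (h4 s t).1 ((h2 s).1.const_mul _),
      integral_sub ((h2 t).1.const_mul _) (integrable_const _), integral_const_mul,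
      integral_const_mul, (h4 s t).2, (h2 s).2, (h2 t).2]
    simp
    ring
  refine ⟨memLp_finsetSum _ fun t _ => ?_, ?_⟩
  · refine memLp_two_of_sq_le (by fun_prop) (hinteg t t) fun x => ?_
    rw [sq]
  · simp_rw [sq, Finset.sum_mul_sum]
    rw [integral_finsetSum _ fun s _ => integrable_finsetSum _ fun t _ => hinteg s t]
    simp_rw [fun s => integral_finsetSum Finset.univ fun t _ => hinteg s t, hval]

end Signal

section Toeplitz

variable {n : ℕ} {σ : ℤ → ℝ} {M : ℝ}

lemma toeplitz_apply_of_even (hσ : ∀ k, σ (-k) = σ k) (i k : Fin n) :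
    toeplitz n σ i k = σ ((i : ℤ) - k) := by
  rw [toeplitz]
  rcases abs_choice ((i : ℤ) - k) with h | h <;> rw [h]
  exact hσ _

lemma sum_sq_sub_add_le (hs : Summable fun k : ℤ => σ k ^ 2) (hM : ∑' k : ℤ, σ k ^ 2 ≤ M)
    {m : ℕ} (a : ℤ) : ∑ t : Fin m, σ (a - t) ^ 2 ≤ M := by
  have hinj : Function.Injective fun t : Fin m => a - (t : ℤ) := fun s t h => by
    simp only [sub_right_inj, Nat.cast_inj] at h
    exact Fin.ext h
  have := tsum_comp_le_tsum_of_inj hs (fun k => sq_nonneg _) hinj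
  rw [tsum_fintype] at this
  exact this.trans hM

lemma sum_sum_toeplitz_le (hσ : ∀ k, σ (-k) = σ k) (hs : Summable fun k : ℤ => σ k ^ 2)
    (hM : ∑' k : ℤ, σ k ^ 2 ≤ M) {m J : ℕ} (p q : Fin m → Fin n)
    (hp : ∀ t, (p t : ℕ) = t) (hq : ∀ t, (q t : ℕ) = t + J) :
    ∑ s, ∑ t, (toeplitz n σ (p s) (p t) * toeplitz n σ (q s) (q t) +
      toeplitz n σ (p s) (q t) * toeplitz n σ (q s) (p t)) ≤ m * (2 * M) := by
  have hrow : ∀ s, ∑ t, (toeplitz n σ (p s) (p t) * toeplitz n σ (q s) (q t) +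
      toeplitz n σ (p s) (q t) * toeplitz n σ (q s) (p t)) ≤ 2 * M := fun s => by
    calc _ ≤ ∑ t : Fin m, (σ ((s : ℤ) - t) ^ 2 + (1 / 2) * σ ((s : ℤ) - J - t) ^ 2 +
          (1 / 2) * σ ((s : ℤ) + J - t) ^ 2) := by
          refine Finset.sum_le_sum fun t _ => ?_
          simp only [toeplitz_apply_of_even hσ, hp, hq]
          push_cast
          rw [show (s : ℤ) + J - (t + J) = s - t by ring,
            show (s : ℤ) - (t + J) = s - J - t by ring]
          nlinarith [sq_nonneg (σ ((s : ℤ) - J - t) - σ ((s : ℤ) + J - t))]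
      _ ≤ 2 * M := by
          simp only [Finset.sum_add_distrib, ← Finset.mul_sum]
          have h1 := sum_sq_sub_add_le hs hM (m := m) s
          have h2 := sum_sq_sub_add_le hs hM (m := m) ((s : ℤ) - J)
          have h3 := sum_sq_sub_add_le hs hM (m := m) ((s : ℤ) + J)
          linarith
  calc _ ≤ ∑ _s : Fin m, 2 * M := Finset.sum_le_sum fun s _ => hrow s
    _ = _ := by rw [Finset.sum_const, Finset.card_univ, Fintype.card_fin, nsmul_eq_mul]

end Toeplitz

/-- The mean square of a sum of six square-integrable variables. -/
lemma lintegral_sq_sum_six_le {Ω : Type*} [MeasurableSpace Ω] {P : Measure Ω}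
    {f : Ω → ℝ} (F : Fin 6 → Ω → ℝ) (K : Fin 6 → ℝ) (r : ℝ) (hF : ∀ i, MemLp (F i) 2 P)
    (hK : ∀ i, ∫ w, F i w ^ 2 ∂P ≤ K i) (hf : ∀ w, f w = r * ∑ i, F i w) :
    ∫⁻ w, ENNReal.ofReal (f w ^ 2) ∂P ≤ ENNReal.ofReal (r ^ 2 * (6 * ∑ i, K i)) := by
  have hi : Integrable (fun w => r ^ 2 * (6 * ∑ i, F i w ^ 2)) P :=
    ((integrable_finsetSum _ fun i _ => (hF i).integrable_sq).const_mul _).const_mul _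
  calc ∫⁻ w, ENNReal.ofReal (f w ^ 2) ∂P
      ≤ ∫⁻ w, ENNReal.ofReal (r ^ 2 * (6 * ∑ i, F i w ^ 2)) ∂P := by
        refine lintegral_mono fun w => ENNReal.ofReal_le_ofReal ?_
        rw [hf, mul_pow]
        have := sq_sum_le_card_mul_sum_sq (s := Finset.univ) (f := fun i => F i w)
        simp only [Finset.card_univ, Fintype.card_fin, Nat.cast_ofNat] at this
        gcongr
    _ = ENNReal.ofReal (∫ w, r ^ 2 * (6 * ∑ i, F i w ^ 2) ∂P) :=
        (ofReal_integral_eq_lintegral_ofReal hi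
          (Filter.Eventually.of_forall fun w => by positivity)).symm
    _ ≤ _ := by
        refine ENNReal.ofReal_le_ofReal ?_
        rw [integral_const_mul, integral_const_mul,
          integral_finsetSum _ fun i _ => (hF i).integrable_sq]
        gcongr with i
        exact hK i

/-- Mean squared error bound with explicit constants; the parameters `l` and `v` control the
truncation error. -/
lemma lintegral_sigmaHatNI_sub_sq_le {n : ℕ} (hn : 0 < n) {α τ : ℝ} (hα : 0 < α) (hτ : 0 < τ)
    {σ : ℤ → ℝ} {M : ℝ} (hσ : ∀ k, σ (-k) = σ k) (hS : (toeplitz n σ).PosSemidef)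
    (hs : Summable fun k : ℤ => σ k ^ 2) (hM : ∑' k : ℤ, σ k ^ 2 ≤ M)
    (μ : Measure (Fin n → ℝ)) [IsProbabilityMeasure μ] (hμ : IsCenteredGaussian μ (toeplitz n σ))
    (j : ℤ) (hj : (|j| : ℝ) ≤ Real.sqrt n) {l v : ℝ} (hl : 0 ≤ l) (hv : σ 0 ≤ v) :
    ∫⁻ w, ENNReal.ofReal ((sigmaHatNI n j τ α w - σ j) ^ 2)
        ∂(μ.prod (Measure.pi fun _ : Fin n => laplace 0 (2 * τ / α))) ≤
      ENNReal.ofReal ((1 / n) * (6 * (n ^ 2 * (96 * rexp (-(l * τ) + v * (l + 1) ^ 2 / 2)) +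
        6 * v ^ 2 + 3 * M + 16 * τ ^ 4 / α ^ 2 + 448 * τ ^ 4 / α ^ 4))) := by
  have hn' : (0 : ℝ) < n := Nat.cast_pos.2 hn
  have hJ : (j.natAbs : ℝ) ^ 2 ≤ n := by
    rw [Nat.cast_natAbs, Int.cast_abs]
    exact (pow_le_pow_left₀ (abs_nonneg _) hj 2).trans_eq (Real.sq_sqrt hn'.le)
  have hJn : j.natAbs ≤ n := by
    have : j.natAbs ^ 2 ≤ n := by exact_mod_cast hJ
    nlinarith
  set J := j.natAbs with hJdef
  have hσJ : σ J = σ j := by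
    rcases Int.natAbs_eq j with h | h
    · rw [← h]
    · rw [← hσ, ← h]
  have hσM : σ j ^ 2 ≤ M := (hs.le_tsum j fun k _ => sq_nonneg _).trans hM
  have hm : ((n - J : ℕ) : ℝ) = n - J := Nat.cast_sub hJn
  have hmn : ((n - J : ℕ) : ℝ) ≤ n := by rw [hm]; linarith [Nat.cast_nonneg (α := ℝ) J]
  set b := 2 * τ / α with hbdef
  have hb : 0 < b := by positivity
  have := isProbabilityMeasure_laplace hb
  set P := μ.prod (Measure.pi fun _ : Fin n => laplace 0 b) with hP
  let p : Fin (n - J) → Fin n := fun t => ⟨t.1, by have := t.isLt; omega⟩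
  let q : Fin (n - J) → Fin n := fun t => ⟨t.1 + J, by have := t.isLt; omega⟩
  have hp : ∀ t, (p t : ℕ) = t := fun t => rfl
  have hq : ∀ t, (q t : ℕ) = t + J := fun t => rfl
  have hpinj : Function.Injective p := fun s t h => Fin.ext (by simpa [p] using h)
  have hqinj : Function.Injective q := fun s t h => Fin.ext (by simpa [q] using h)
  have hSpq : ∀ t, toeplitz n σ (p t) (q t) = σ j := fun t => by
    rw [toeplitz_apply_of_even hσ, hp, hq, ← hσJ, ← hσ]
    push_cast
    congr 1
    ring
  have hdiag : ∀ i, toeplitz n σ i i ≤ v := fun i => by simpa [toeplitz] using hv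
  have hfst : MeasurePreserving Prod.fst P μ := measurePreserving_fst
  obtain ⟨A1, A2⟩ := hμ.integral_sq_sum_trim_sub_le hS p q hτ.le hl hn' hdiag
  obtain ⟨B1, B2⟩ := hμ.integral_sq_sum_sub hS p q
  obtain ⟨C1, C2⟩ := integral_sq_sum_trim_mul_noise_le μ hb p q hqinj hτ.le
  obtain ⟨D1, D2⟩ := integral_sq_sum_trim_mul_noise_le μ hb q p hpinj hτ.le
  obtain ⟨E, E1, E2, hE⟩ : ∃ E : (Fin n → ℝ) × (Fin n → ℝ) → ℝ, MemLp E 2 P ∧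
      ∫ w, E w ^ 2 ∂P ≤ (n - J : ℕ) * (28 * b ^ 4) ∧
      ∀ w, E w = ∑ t, w.2 (p t) * w.2 (q t) -
        n * (if j = 0 then 8 * τ ^ 2 / α ^ 2 else 0) := by
    by_cases h0 : j = 0
    · have hJ0 : J = 0 := by simp [hJdef, h0]
      obtain ⟨E1, E2⟩ := integral_sq_sum_noise_sq_sub_le μ hb p hpinj
      refine ⟨_, E1, E2, fun w => ?_⟩
      have hqp : ∀ t, q t = p t := fun t => Fin.ext (by have := hp t; have := hq t; omega)
      have hmn0 : ((n - J : ℕ) : ℝ) = n := by rw [hm, hJ0]; simp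
      have h2b : 2 * b ^ 2 = 8 * τ ^ 2 / α ^ 2 := by rw [hbdef]; field_simp; ring
      simp only [hqp, Finset.sum_sub_distrib, Finset.sum_const, Finset.card_univ,
        Fintype.card_fin, nsmul_eq_mul, if_pos h0]
      rw [hmn0, h2b]
      simp only [sq]
    · obtain ⟨E1, E2⟩ := integral_sq_sum_noise_mul_noise_le μ hb (Int.natAbs_pos.2 h0) p q hp hq
      exact ⟨_, E1, E2, fun w => by simp [h0]⟩
  have A1' := A1.comp_measurePreserving hfst
  have B1' := B1.comp_measurePreserving hfst
  have A2' := (hfst.integral_comp_of_measurable (g := fun x : Fin n → ℝ =>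
    (∑ t, (trim τ (x (p t)) * trim τ (x (q t)) - x (p t) * x (q t))) ^ 2) (by fun_prop)).trans_le A2
  have B2' := (hfst.integral_comp_of_measurable (g := fun x : Fin n → ℝ =>
    (∑ t, (x (p t) * x (q t) - toeplitz n σ (p t) (q t))) ^ 2) (by fun_prop)).trans_le
    (B2.trans_le (sum_sum_toeplitz_le hσ hs hM p q hp hq))
  refine (lintegral_sq_sum_six_le (P := P)
    (F := ![fun w => ∑ t, (trim τ (w.1 (p t)) * trim τ (w.1 (q t)) - w.1 (p t) * w.1 (q t)),
      fun w => ∑ t, (w.1 (p t) * w.1 (q t) - toeplitz n σ (p t) (q t)),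
      fun w => ∑ t, trim τ (w.1 (p t)) * w.2 (q t),
      fun w => ∑ t, trim τ (w.1 (q t)) * w.2 (p t), E, fun _ => -(J * σ j)])
    (K := ![(n - J : ℕ) * ((n - J : ℕ) * (n * (96 * rexp (-(l * τ) + v * (l + 1) ^ 2 / 2)) +
        (n : ℝ)⁻¹ * (6 * v ^ 2))), (n - J : ℕ) * (2 * M), (n - J : ℕ) * (τ ^ 2 * (2 * b ^ 2)),
      (n - J : ℕ) * (τ ^ 2 * (2 * b ^ 2)), (n - J : ℕ) * (28 * b ^ 4), (J * σ j) ^ 2])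
    (r := 1 / n) ?_ ?_ ?_).trans ?_
  · intro i
    fin_cases i
    exacts [A1', B1', C1, D1, E1, memLp_const _]
  · intro i
    fin_cases i
    exacts [A2', B2', C2, D2, E2, by simp]
  · intro w
    simp only [Fin.sum_univ_six, Matrix.cons_val, hE, hSpq]
    rw [sigmaHatNI]
    have e : ∑ t : Fin (n - J), (trim τ (w.1 (p t)) + w.2 (p t)) *
        (trim τ (w.1 (q t)) + w.2 (q t)) =
        ∑ t, (trim τ (w.1 (p t)) * trim τ (w.1 (q t)) - w.1 (p t) * w.1 (q t)) +
        ∑ t, (w.1 (p t) * w.1 (q t) - σ j) + ∑ t, trim τ (w.1 (p t)) * w.2 (q t) +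
        ∑ t, trim τ (w.1 (q t)) * w.2 (p t) + ∑ t, w.2 (p t) * w.2 (q t) + (n - J) * σ j := by
      have : ((n : ℝ) - J) * σ j = ∑ _t : Fin (n - J), σ j := by
        rw [Finset.sum_const, Finset.card_univ, Fintype.card_fin, nsmul_eq_mul, hm]
      rw [this]
      simp only [← Finset.sum_add_distrib]
      exact Finset.sum_congr rfl fun t _ => by ring
    change 1 / (n : ℝ) * (∑ t : Fin (n - J), (trim τ (w.1 (p t)) + w.2 (p t)) *
        (trim τ (w.1 (q t)) + w.2 (q t))) - _ - _ = _
    rw [e]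
    field_simp
    ring
  · refine ENNReal.ofReal_le_ofReal ?_
    simp only [Fin.sum_univ_six, Matrix.cons_val]
    set R := rexp (-(l * τ) + v * (l + 1) ^ 2 / 2) with hR
    have hRpos : 0 ≤ R := (Real.exp_pos _).le
    have hM0 : 0 ≤ M := (sq_nonneg _).trans hσM
    set m : ℝ := ((n - J : ℕ) : ℝ) with hmdef
    have hm0 : 0 ≤ m := Nat.cast_nonneg _
    have kA : m * (m * (n * (96 * R) + (n : ℝ)⁻¹ * (6 * v ^ 2))) ≤
        n * (n * (n * (96 * R) + (n : ℝ)⁻¹ * (6 * v ^ 2))) := by gcongr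
    have kA' : (n : ℝ) * (n * (n * (96 * R) + (n : ℝ)⁻¹ * (6 * v ^ 2))) =
        n * (n ^ 2 * (96 * R) + 6 * v ^ 2) := by field_simp
    have kB : m * (2 * M) ≤ n * (2 * M) := by gcongr
    have kC : m * (τ ^ 2 * (2 * b ^ 2)) ≤ n * (8 * τ ^ 4 / α ^ 2) := by
      have : τ ^ 2 * (2 * b ^ 2) = 8 * τ ^ 4 / α ^ 2 := by rw [hbdef]; field_simp; ring
      rw [this]; gcongr
    have kE : m * (28 * b ^ 4) ≤ n * (448 * τ ^ 4 / α ^ 4) := by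
      have : 28 * b ^ 4 = 448 * τ ^ 4 / α ^ 4 := by rw [hbdef]; field_simp; ring
      rw [this]; gcongr
    have kG : (J * σ j) ^ 2 ≤ n * M := by
      rw [mul_pow]; gcongr
    calc _ ≤ (1 / (n : ℝ)) ^ 2 * (6 * (n * (n ^ 2 * (96 * R) + 6 * v ^ 2) + n * (2 * M) +
          n * (8 * τ ^ 4 / α ^ 2) + n * (8 * τ ^ 4 / α ^ 2) + n * (448 * τ ^ 4 / α ^ 4) +
          n * M)) := by
          refine mul_le_mul_of_nonneg_left (mul_le_mul_of_nonneg_left ?_ (by norm_num))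
            (by positivity)
          linarith [kA.trans_eq kA']
      _ = _ := by field_simp; ring

/-- Exponent of the truncation error at the truncation level `τ`. -/
lemma exponent_le {τ v L : ℝ} (hv : 0 < v) (h : 56 * (v * L) ≤ τ ^ 2) (hL : 0 ≤ L) :
    -((τ / v - 1) * τ) + v * (τ / v - 1 + 1) ^ 2 / 2 ≤ v - 2 * L := by
  have e : -((τ / v - 1) * τ) + v * (τ / v - 1 + 1) ^ 2 / 2 = v - (τ / (2 * v) - 1) ^ 2 * v -
      τ ^ 2 / (4 * v) := by field_simp; ring
  have h1 : 14 * L ≤ τ ^ 2 / (4 * v) := by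
    rw [le_div_iff₀ (by positivity)]; linarith
  have h2 : 0 ≤ (τ / (2 * v) - 1) ^ 2 * v := by positivity
  linarith

/-- Rate of convergence of the non-interactive private estimator of a covariance
coefficient (Proposition 2.1 i) of the paper): the mean squared error is at most
`c₁ · log^{2+2δ}(n) · max{1/n, 1/(nα⁴)}`. -/
theorem noninteractive_covariance_rate
    (δ M₁ : ℝ) (hδ : 0 < δ) (hM₁ : 0 < M₁) :
    ∃ c₁ : ℝ, 0 < c₁ ∧
      ∃ N : ℕ, ∀ n : ℕ, N ≤ n → ∀ α : ℝ, α ∈ Set.Ioo (0 : ℝ) 1 →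
      ∀ τ : ℝ, τ = Real.sqrt (56 * Real.log n ^ (1 + δ)) →
      ∀ σ : ℤ → ℝ, (∀ k, σ (-k) = σ k) → (toeplitz n σ).PosSemidef →
        Summable (fun k : ℤ => σ k ^ 2) → (∑' k : ℤ, σ k ^ 2) ≤ M₁ →
      ∀ μX : Measure (Fin n → ℝ), IsProbabilityMeasure μX →
        IsCenteredGaussian μX (toeplitz n σ) →
      ∀ j : ℤ, (|j| : ℝ) ≤ Real.sqrt n →
        (∫⁻ w : (Fin n → ℝ) × (Fin n → ℝ),
            ENNReal.ofReal ((sigmaHatNI n j τ α w - σ j) ^ 2)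
          ∂(μX.prod (Measure.pi fun _ : Fin n => laplace 0 (2 * τ / α)))) ≤
          ENNReal.ofReal
            (c₁ * Real.log n ^ (2 + 2 * δ) *
              max (1 / (n : ℝ)) (1 / (n * α ^ 4))) := by
  set v := Real.sqrt M₁ with hv
  have hvpos : 0 < v := Real.sqrt_pos.2 hM₁
  have hlog : Filter.Tendsto (fun n : ℕ => Real.log n) Filter.atTop Filter.atTop :=
    Real.tendsto_log_atTop.comp tendsto_natCast_atTop_atTop
  obtain ⟨N, hN⟩ := Filter.eventually_atTop.1
    ((hlog.eventually_ge_atTop 1).and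
      ((((tendsto_rpow_atTop hδ).comp hlog).eventually_ge_atTop v).and
        (((tendsto_rpow_atTop (by linarith : 0 < 1 + δ)).comp hlog).eventually_ge_atTop (v ^ 2))))
  refine ⟨6 * (96 * rexp v + 6 * v ^ 2 + 3 * M₁ + 464 * 56 ^ 2), by positivity, N, ?_⟩
  intro n hn α hα τ hτ σ hσ hS hs hM μX _ hμ j hj
  obtain ⟨hL1, hL2, hL3⟩ := hN n hn
  simp only [Function.comp_apply] at hL2 hL3
  set L := Real.log n with hL
  have hLpos : 0 < L := by linarith
  have hn0 : 0 < n := Nat.pos_of_ne_zero fun h => by simp [hL, h] at hLpos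
  have hn' : (0 : ℝ) < n := Nat.cast_pos.2 hn0
  have hpow : 0 < L ^ (1 + δ) := Real.rpow_pos_of_pos hLpos _
  have hτ2 : τ ^ 2 = 56 * L ^ (1 + δ) := by rw [hτ, Real.sq_sqrt (by positivity)]
  have hτpos : 0 < τ := by rw [hτ]; exact Real.sqrt_pos.2 (by positivity)
  have hτ4 : τ ^ 4 = 56 ^ 2 * L ^ (2 + 2 * δ) := by
    rw [show (2 : ℝ) + 2 * δ = (1 + δ) * 2 by ring, Real.rpow_mul hLpos.le, Real.rpow_two,
      ← mul_pow, ← hτ2]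
    ring
  have hvτ : v ≤ τ := by
    refine le_of_sq_le_sq ?_ hτpos.le
    rw [hτ2]; linarith
  have hσ0 : σ 0 ≤ v :=
    Real.le_sqrt_of_sq_le ((hs.le_tsum 0 fun k _ => sq_nonneg _).trans hM)
  have hexp : rexp (-((τ / v - 1) * τ) + v * (τ / v - 1 + 1) ^ 2 / 2) ≤ rexp v / n ^ 2 := by
    have h1 : 56 * (v * L) ≤ τ ^ 2 := by
      rw [hτ2, Real.rpow_add hLpos, Real.rpow_one]
      nlinarith
    refine (Real.exp_le_exp.2 (exponent_le hvpos h1 hLpos.le)).trans_eq ?_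
    rw [Real.exp_sub, two_mul, Real.exp_add, hL, Real.exp_log hn', sq]
  refine (lintegral_sigmaHatNI_sub_sq_le hn0 hα.1 hτpos hσ hS hs hM μX hμ j hj
    (l := τ / v - 1) (by rw [sub_nonneg, le_div_iff₀ hvpos]; linarith) hσ0).trans ?_
  refine ENNReal.ofReal_le_ofReal ?_
  have hα0 := hα.1
  have hα2 : α ^ 4 ≤ α ^ 2 := pow_le_pow_of_le_one hα0.le hα.2.le (by norm_num)
  have hα4 : α ^ 4 ≤ 1 := pow_le_one₀ hα0.le hα.2.le
  set Q := L ^ (2 + 2 * δ) with hQ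
  have hQ1 : 1 ≤ Q := Real.one_le_rpow hL1 (by linarith)
  have hlarge : ∀ a : ℝ, 0 ≤ a → a ≤ a * Q / α ^ 4 := fun a ha => by
    rw [le_div_iff₀ (by positivity)]
    exact mul_le_mul_of_nonneg_left (hα4.trans hQ1) ha
  calc _ ≤ (1 / (n : ℝ)) * (6 * (n ^ 2 * (96 * (rexp v / n ^ 2)) + 6 * v ^ 2 + 3 * M₁ +
        16 * τ ^ 4 / α ^ 4 + 448 * τ ^ 4 / α ^ 4)) := by gcongr
    _ = (1 / (n : ℝ)) * (6 * ((96 * rexp v + 6 * v ^ 2 + 3 * M₁) +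
        464 * 56 ^ 2 * Q / α ^ 4)) := by rw [hτ4]; field_simp; ring
    _ ≤ (1 / (n : ℝ)) * (6 * ((96 * rexp v + 6 * v ^ 2 + 3 * M₁) * Q / α ^ 4 +
        464 * 56 ^ 2 * Q / α ^ 4)) := by
        gcongr
        exact hlarge _ (by positivity)
    _ = 6 * (96 * rexp v + 6 * v ^ 2 + 3 * M₁ + 464 * 56 ^ 2) * Q * (1 / (n * α ^ 4)) := by
        field_simp
    _ ≤ _ := by
        gcongr
        exact le_max_right _ _
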